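/- arXiv:1110.5001 — 2 statements merged into one kernel-verified Lean document; each statement's English description precedes it below -/
import Mathlib

section
/- Let p be a prime and let (M_e, φ_e) be a p-compatible system. If m = (m_e) ∈ lim_e M_e satisfies m_n = 0 for some n, then m is divisible by p^n in lim_e M_e, i.e., there exists m' ∈ lim_e M_e with m = p^n m'. -/
/-- The limit `lim_e M_e` of an `ℕ`-indexed projective system of abelian groups,
realized as the subgroup of the product `∀ e, M e` of compatible families. -/
def projLim (M : ℕ → Type*) [∀ e, AddCommGroup (M e)] (φ : ∀ e, M (e + 1) →+ M e) :
    AddSubgroup (∀ e, M e) where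
  carrier := { m | ∀ e, φ e (m (e + 1)) = m e }
  zero_mem' := by intro e; simp
  add_mem' := by intro a b ha hb e; simp [ha e, hb e]
  neg_mem' := by intro a ha e; simp [ha e]

/-!
If `m_e = 0`, then `m_{e+1}` lies in the kernel of `M_{e+1} → M_e`, so `m_{e+1} = p^e y`. The
projection of the limit to `M_{e+1}` is surjective, so `y` lifts to some `x` in the limit, and
`m - p^e x` vanishes at `e + 1`. Starting from `m_n = 0` and iterating, `m` is expanded as
`p^n x_0 + p^{n+1} x_1 + ⋯ = p^n (x_0 + p x_1 + ⋯)`, where each coordinate of the last series is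
a finite sum because `p^k M_k = 0`.
-/

namespace projLim

section AddCommGroup

variable {M : ℕ → Type*} [∀ e, AddCommGroup (M e)] {φ : ∀ e, M (e + 1) →+ M e}

theorem apply_eq_zero_of_le {m : ∀ e, M e} (hm : m ∈ projLim M φ) {k e : ℕ} (hke : k ≤ e)
    (he : m e = 0) : m k = 0 := by
  induction hke using Nat.decreasingInduction with
  | self => exact he
  | of_succ k _ ih => rw [← hm k, ih, map_zero]

theorem exists_mem_apply_zero_eq (surj : ∀ e, Function.Surjective (φ e)) (y : M 0) :
    ∃ x ∈ projLim M φ, x 0 = y :=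
  ⟨Nat.rec y fun e ↦ Function.surjInv (surj e), fun e ↦ Function.surjInv_eq (surj e) _, rfl⟩

theorem exists_mem_apply_eq (surj : ∀ e, Function.Surjective (φ e)) (e : ℕ) (y : M e) :
    ∃ x ∈ projLim M φ, x e = y := by
  induction e generalizing M with
  | zero => exact exists_mem_apply_zero_eq surj y
  | succ e ih =>
    -- Lift `y` to the limit of the shifted system, which determines the missing coordinate `0`.
    obtain ⟨x, hx, hxy⟩ :=
      ih (M := fun k ↦ M (k + 1)) (φ := fun k ↦ φ (k + 1)) (fun k ↦ surj (k + 1)) y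
    refine ⟨Nat.rec (φ 0 (x 0)) fun k _ ↦ x k, ?_, hxy⟩
    rintro (_ | k)
    · rfl
    · exact hx k

end AddCommGroup

section Module

variable {R : Type*} [Semiring R] {M : ℕ → Type*} [∀ e, AddCommGroup (M e)]
  [∀ e, Module R (M e)] {φ : ∀ e, M (e + 1) →ₗ[R] M e}

theorem smul_mem (a : R) {m : ∀ e, M e} (hm : m ∈ projLim M fun e ↦ (φ e).toAddMonoidHom) :
    a • m ∈ projLim M fun e ↦ (φ e).toAddMonoidHom :=
  fun e ↦ ((φ e).map_smul a (m (e + 1))).trans (congrArg (a • ·) (hm e))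

theorem sum_range_pow_smul_mem {a : R} (tors : ∀ (e : ℕ) (x : M e), a ^ e • x = 0)
    {x : ℕ → ∀ e, M e} (hx : ∀ i, x i ∈ projLim M fun e ↦ (φ e).toAddMonoidHom) :
    (fun k ↦ ∑ i ∈ Finset.range k, a ^ i • x i k) ∈
      projLim M fun e ↦ (φ e).toAddMonoidHom := by
  intro k
  calc φ k (∑ i ∈ Finset.range (k + 1), a ^ i • x i (k + 1))
      = ∑ i ∈ Finset.range (k + 1), a ^ i • φ k (x i (k + 1)) := by
        simp only [map_sum, map_smul]
    _ = ∑ i ∈ Finset.range (k + 1), a ^ i • x i k :=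
        Finset.sum_congr rfl fun i _ ↦ congrArg (a ^ i • ·) (hx i k)
    _ = ∑ i ∈ Finset.range k, a ^ i • x i k := by
        rw [Finset.sum_range_succ, tors, add_zero]

theorem exists_sub_pow_smul_apply_succ_eq_zero {a : R}
    (surj : ∀ e, Function.Surjective (φ e))
    (ker : ∀ (e : ℕ) (x : M (e + 1)), φ e x = 0 → ∃ y, x = a ^ e • y)
    {m : ∀ e, M e} (hm : m ∈ projLim M fun e ↦ (φ e).toAddMonoidHom) {e : ℕ} (he : m e = 0) :
    ∃ x ∈ projLim M fun e ↦ (φ e).toAddMonoidHom, (m - a ^ e • x) (e + 1) = 0 := by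
  obtain ⟨y, hy⟩ := ker e (m (e + 1)) ((hm e).trans he)
  obtain ⟨x, hx, hxy⟩ := exists_mem_apply_eq (φ := fun e ↦ (φ e).toAddMonoidHom) surj (e + 1) y
  exact ⟨x, hx, by rw [Pi.sub_apply, Pi.smul_apply, hxy, hy, sub_self]⟩

theorem exists_seq_sub_sum_pow_smul_apply_eq_zero {a : R}
    (surj : ∀ e, Function.Surjective (φ e))
    (ker : ∀ (e : ℕ) (x : M (e + 1)), φ e x = 0 → ∃ y, x = a ^ e • y)
    {m : ∀ e, M e} (hm : m ∈ projLim M fun e ↦ (φ e).toAddMonoidHom) {n : ℕ} (hn : m n = 0) :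
    ∃ x : ℕ → ∀ e, M e, (∀ i, x i ∈ projLim M fun e ↦ (φ e).toAddMonoidHom) ∧
      ∀ j, (m - ∑ i ∈ Finset.range j, a ^ (n + i) • x i) (n + j) = 0 := by
  let Remainder (j : ℕ) :=
    {r : ∀ e, M e // r ∈ projLim M (fun e ↦ (φ e).toAddMonoidHom) ∧ r (n + j) = 0}
  choose x hx hx_zero using fun j (r : Remainder j) ↦
    exists_sub_pow_smul_apply_succ_eq_zero surj ker r.2.1 r.2.2
  let r : ∀ j, Remainder j := Nat.rec ⟨m, hm, hn⟩ fun j r ↦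
    ⟨r.1 - a ^ (n + j) • x j r, sub_mem r.2.1 (smul_mem _ (hx j r)), hx_zero j r⟩
  have r_eq (j : ℕ) : (r j).1 = m - ∑ i ∈ Finset.range j, a ^ (n + i) • x i (r i) := by
    induction j with
    | zero => exact (sub_zero m).symm
    | succ j ih => rw [Finset.sum_range_succ, ← sub_sub, ← ih]
  exact ⟨fun i ↦ x i (r i), fun i ↦ hx i (r i), fun j ↦ r_eq j ▸ (r j).2.2⟩

end Module

end projLim

open projLim in
theorem statement2_general {R : Type*} [Semiring R] (a : R) (M : ℕ → Type*)
    [∀ e, AddCommGroup (M e)] [∀ e, Module R (M e)] (φ : ∀ e, M (e + 1) →ₗ[R] M e)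
    (tors : ∀ (e : ℕ) (x : M e), a ^ e • x = 0)
    (surj : ∀ e, Function.Surjective (φ e))
    (ker : ∀ (e : ℕ) (x : M (e + 1)), φ e x = 0 → ∃ y, x = a ^ e • y)
    (n : ℕ) (m : ∀ e, M e) (hm : m ∈ projLim M fun e ↦ (φ e).toAddMonoidHom) (hn : m n = 0) :
    ∃ m' ∈ projLim M fun e ↦ (φ e).toAddMonoidHom, m = a ^ n • m' := by
  obtain ⟨x, hx, hx_zero⟩ := exists_seq_sub_sum_pow_smul_apply_eq_zero surj ker hm hn
  refine ⟨fun k ↦ ∑ i ∈ Finset.range k, a ^ i • x i k, sum_range_pow_smul_mem tors hx, ?_⟩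
  funext k
  have remainder_mem : m - ∑ i ∈ Finset.range k, a ^ (n + i) • x i ∈
      projLim M fun e ↦ (φ e).toAddMonoidHom :=
    sub_mem hm (sum_mem fun i _ ↦ smul_mem _ (hx i))
  have remainder_apply : (m - ∑ i ∈ Finset.range k, a ^ (n + i) • x i) k = 0 :=
    apply_eq_zero_of_le remainder_mem (Nat.le_add_left k n) (hx_zero k)
  calc m k = ∑ i ∈ Finset.range k, a ^ (n + i) • x i k := by
        simpa only [Pi.sub_apply, Finset.sum_apply, Pi.smul_apply, sub_eq_zero]
          using remainder_apply
    _ = a ^ n • ∑ i ∈ Finset.range k, a ^ i • x i k := by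
        simp only [pow_add, mul_smul, Finset.smul_sum]

/-- Let `p` be a prime and `(M_e, φ_e)` a `p`-compatible system:
each `M_e` is killed by `p^e` (equivalently, is a `ℤ/p^e`-module), each `φ_e` is
surjective with kernel `p^e M_{e+1}` (i.e. induces `M_{e+1}/p^e ≅ M_e`).
If `m = (m_e) ∈ lim_e M_e` satisfies `m_n = 0`, then `m = p^n • m'` for some
`m' ∈ lim_e M_e`. -/
theorem statement2 (p : ℕ) (hp : p.Prime)
    (M : ℕ → Type*) [∀ e, AddCommGroup (M e)] (φ : ∀ e, M (e + 1) →+ M e)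
    (tors : ∀ (e : ℕ) (x : M e), p ^ e • x = 0)
    (surj : ∀ e, Function.Surjective (φ e))
    (ker : ∀ (e : ℕ) (x : M (e + 1)), φ e x = 0 ↔ ∃ y : M (e + 1), x = p ^ e • y)
    (n : ℕ) (m : projLim M φ) (hm : (m : ∀ e, M e) n = 0) :
    ∃ m' : projLim M φ, m = p ^ n • m' := by
  obtain ⟨m', hm', h⟩ := statement2_general p M (fun e ↦ (φ e).toNatLinearMap) tors surj
    (fun e x ↦ (ker e x).1) n m m.2 hm
  exact ⟨⟨m', hm'⟩, Subtype.ext h⟩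
end

section
/- Let σ be a set and let P = ℤ_p[{x_i}_{i ∈ σ}] be the polynomial ring over ℤ_p in variables indexed by σ. For each n ≥ 0 let P(n) = P ⊗_{ℤ_p} ⋯ ⊗_{ℤ_p} P ((n+1) tensor factors), viewed as a cosimplicial commutative ring via the monotone maps: a morphism f : [n] → [m] in Δ induces the ring map P(n) → P(m) sending the element x_i placed in the e-th tensor slot to x_i placed in the f(e)-th tensor slot. Then the cochain complex of abelian groups whose n-th term is the module of Kähler differentials Ω¹_{P(n)/ℤ_p} and whose differential d^n = Σ_{j=0}^{n+1} (−1)^j (δ^n_j)_* is the alternating sum of the maps on Kähler differentials induced by the coface ring homomorphisms is homotopy equivalent to the zero cochain complex. -/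
open KaehlerDifferential

/-- The map `g_* : Ω¹_{A/R} → Ω¹_{B/R}` on Kähler differentials induced by a homomorphism
`g : A → B` of commutative `R`-algebras, sending `b · db'` to `g(b) · d(g(b'))`. -/
noncomputable def kaehlerMap {R A B : Type*} [CommRing R] [CommRing A] [CommRing B]
    [Algebra R A] [Algebra R B] (g : A →ₐ[R] B) : Ω[A⁄R] →+ Ω[B⁄R] :=
  letI : Algebra A B := g.toRingHom.toAlgebra
  haveI : IsScalarTower R A B := IsScalarTower.of_algebraMap_eq fun r => (g.commutes r).symm
  haveI : SMulCommClass R A B :=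
    ⟨fun r a b => by simp only [Algebra.smul_def, ← mul_assoc, mul_comm]⟩
  (KaehlerDifferential.map R R A B).toAddMonoidHom

/-- `P(n) = P ⊗_{ℤ_p} ⋯ ⊗_{ℤ_p} P` (`n+1` tensor factors) for `P = ℤ_p[{x_i}_{i ∈ σ}]`,
realized as the polynomial ring on the variables `x_i(e) = 1 ⊗ ⋯ ⊗ x_i ⊗ ⋯ ⊗ 1`
(with `x_i` in the `e`-th slot), i.e. on `σ × Fin (n+1)`. -/
abbrev tensorPowerPoly (p : ℕ) [Fact p.Prime] (σ : Type*) (n : ℕ) : Type _ :=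
  MvPolynomial (σ × Fin (n + 1)) (PadicInt p)

/-- The `j`-th coface ring homomorphism `δ^n_j : P(n) → P(n+1)`: it sends the variable
`x_i` in the `e`-th tensor slot to `x_i` in the `δ^n_j(e)`-th slot, where
`δ^n_j = Fin.succAbove j` is the injective monotone map omitting `j`
(slot `e ↦ e` for `e < j` and `e ↦ e+1` for `e ≥ j`). -/
noncomputable def tensorPowerPolyCoface (p : ℕ) [Fact p.Prime] (σ : Type*) (n : ℕ)
    (j : Fin (n + 2)) : tensorPowerPoly p σ n →ₐ[PadicInt p] tensorPowerPoly p σ (n + 1) :=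
  MvPolynomial.rename (Prod.map id (Fin.succAbove j))

/-- The differential `d^n = Σ_{j=0}^{n+1} (−1)^j (δ^n_j)_*` on Kähler differentials. -/
noncomputable def tensorPowerPolyOmegaDiff (p : ℕ) [Fact p.Prime] (σ : Type*) (n : ℕ) :
    Ω[tensorPowerPoly p σ n⁄PadicInt p] →+ Ω[tensorPowerPoly p σ (n + 1)⁄PadicInt p] :=
  ∑ j : Fin (n + 2), (-1 : ℤ) ^ (j : ℕ) • kaehlerMap (tensorPowerPolyCoface p σ n j)

/-! `P(•)` is the Čech conerve of `ℤ_p → P`, and this map has a retraction, evaluation at `0`.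
Applying the retraction to the first tensor factor gives an extra codegeneracy
`s : P(n + 1) → P(n)`, with `s ∘ δ_0 = id` and `s ∘ δ_{j+1} = δ_j ∘ s`, so the map that `s` induces
on differentials contracts the complex augmented by `Ω¹_{P(-1)}`. The augmentation term is zero
because `P(-1) = ℤ_p`. -/

section KaehlerMap

variable {R A B C : Type*} [CommRing R] [CommRing A] [CommRing B] [CommRing C]
  [Algebra R A] [Algebra R B] [Algebra R C]

theorem kaehlerMap_smul_D (g : A →ₐ[R] B) (a b : A) :
    kaehlerMap g (a • D R A b) = g a • D R B (g b) := by
  let : Algebra A B := g.toRingHom.toAlgebra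
  have : IsScalarTower R A B := IsScalarTower.of_algebraMap_eq fun r => (g.commutes r).symm
  have : SMulCommClass R A B :=
    ⟨fun r a b => by simp only [Algebra.smul_def, ← mul_assoc, mul_comm]⟩
  calc KaehlerDifferential.map R R A B (a • D R A b)
      = a • D R B (algebraMap A B b) := by rw [map_smul, map_D]
    _ = g a • D R B (g b) := (algebraMap_smul B a _).symm

theorem kaehlerDifferential_addHom_ext {M : Type*} [AddCommGroup M] {f g : Ω[A⁄R] →+ M}
    (h : ∀ a b : A, f (a • D R A b) = g (a • D R A b)) : f = g := by
  ext ω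
  have hω : ω ∈ Submodule.span A (Set.range (D R A)) := by
    rw [span_range_derivation]
    exact Submodule.mem_top
  induction hω using Submodule.closure_induction with
  | zero => rw [map_zero, map_zero]
  | add ω η _ _ hω hη => rw [map_add, map_add, hω, hη]
  | smul_mem a ω hω =>
    obtain ⟨b, rfl⟩ := hω
    exact h a b

theorem kaehlerMap_id : kaehlerMap (AlgHom.id R A) = AddMonoidHom.id Ω[A⁄R] :=
  kaehlerDifferential_addHom_ext fun a b => kaehlerMap_smul_D _ a b

theorem kaehlerMap_comp (g : B →ₐ[R] C) (f : A →ₐ[R] B) :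
    kaehlerMap (g.comp f) = (kaehlerMap g).comp (kaehlerMap f) :=
  kaehlerDifferential_addHom_ext fun a b => by
    simp only [AddMonoidHom.comp_apply, kaehlerMap_smul_D, AlgHom.comp_apply]

end KaehlerMap

section AlternatingSum

variable {A B C : Type*} [AddCommGroup A] [AddCommGroup B] [AddCommGroup C]

/-- The alternating sum `f 0 - f 1 + f 2 - ⋯` of a finite sequence of homomorphisms, the shape of
the differential of the cochain complex of a cosimplicial abelian group. -/
def alternatingSum {m : ℕ} (f : Fin m → A →+ B) : A →+ B :=
  ∑ j : Fin m, (-1 : ℤ) ^ (j : ℕ) • f j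

theorem alternatingSum_comp {m : ℕ} (f : Fin m → B →+ C) (g : A →+ B) :
    (alternatingSum f).comp g = alternatingSum fun j => (f j).comp g := by
  ext a
  simp only [alternatingSum, AddMonoidHom.comp_apply, AddMonoidHom.finsetSum_apply,
    AddMonoidHom.smul_apply]

theorem comp_alternatingSum {m : ℕ} (g : B →+ C) (f : Fin m → A →+ B) :
    g.comp (alternatingSum f) = alternatingSum fun j => g.comp (f j) := by
  ext a
  simp only [alternatingSum, AddMonoidHom.comp_apply, AddMonoidHom.finsetSum_apply,
    AddMonoidHom.smul_apply, map_sum, map_zsmul]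

theorem alternatingSum_succ {m : ℕ} (f : Fin (m + 1) → A →+ B) :
    alternatingSum f = f 0 - alternatingSum fun j => f j.succ := by
  simp only [alternatingSum, Fin.sum_univ_succ, Fin.val_zero, Fin.val_succ, pow_zero, one_smul,
    pow_succ, mul_neg_one, neg_smul, Finset.sum_neg_distrib, sub_eq_add_neg]

theorem comp_alternatingSum_add_alternatingSum_comp {m : ℕ} {δ : Fin m → A →+ B}
    {δ' : Fin (m + 1) → B →+ C} {s : B →+ A} {s' : C →+ B}
    (h_zero : s'.comp (δ' 0) = AddMonoidHom.id B)
    (h_succ : ∀ j, s'.comp (δ' j.succ) = (δ j).comp s) :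
    s'.comp (alternatingSum δ') + (alternatingSum δ).comp s = AddMonoidHom.id B := by
  rw [comp_alternatingSum, alternatingSum_comp, alternatingSum_succ]
  simp only [h_zero, h_succ, sub_add_cancel]

end AlternatingSum

section SlotPolynomials

open MvPolynomial

variable (R σ : Type*) [CommRing R]

/-- The `j`-th coface map on polynomials over `R` in the variables `x_i(e)`, with `i ∈ σ` and `e`
one of `m` slots. The number of slots is arbitrary, so that `m = 0` gives the augmentation
`R → R[x_i]`. -/
noncomputable def slotCoface {m : ℕ} (j : Fin (m + 1)) :
    MvPolynomial (σ × Fin m) R →ₐ[R] MvPolynomial (σ × Fin (m + 1)) R :=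
  rename (Prod.map id j.succAbove)

/-- The extra codegeneracy: it evaluates the variables `x_i(0)` of the first slot at `0` and moves
the remaining slots down by one. -/
noncomputable def slotExtraCodegeneracy (m : ℕ) :
    MvPolynomial (σ × Fin (m + 1)) R →ₐ[R] MvPolynomial (σ × Fin m) R :=
  aeval fun v => Fin.cases 0 (fun e => X (v.1, e)) v.2

/-- The alternating sum of the maps induced by the cofaces on Kähler differentials, from `m` slots
to `m + 1` slots. -/
noncomputable def slotOmegaDiff (m : ℕ) :
    Ω[MvPolynomial (σ × Fin m) R⁄R] →+ Ω[MvPolynomial (σ × Fin (m + 1)) R⁄R] :=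
  alternatingSum fun j => kaehlerMap (slotCoface R σ j)

theorem slotExtraCodegeneracy_comp_slotCoface_zero (m : ℕ) :
    (slotExtraCodegeneracy R σ m).comp (slotCoface R σ 0) = AlgHom.id R _ := by
  ext1 ⟨i, e⟩
  simp [slotExtraCodegeneracy, slotCoface]

theorem slotExtraCodegeneracy_comp_slotCoface_succ {m : ℕ} (j : Fin (m + 1)) :
    (slotExtraCodegeneracy R σ (m + 1)).comp (slotCoface R σ j.succ) =
      (slotCoface R σ j).comp (slotExtraCodegeneracy R σ m) := by
  ext1 ⟨i, e⟩
  cases e using Fin.cases <;> simp [slotExtraCodegeneracy, slotCoface]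

theorem slotOmegaDiff_contraction (m : ℕ) :
    (kaehlerMap (slotExtraCodegeneracy R σ (m + 1))).comp (slotOmegaDiff R σ (m + 1)) +
      (slotOmegaDiff R σ m).comp (kaehlerMap (slotExtraCodegeneracy R σ m)) =
        AddMonoidHom.id _ := by
  refine comp_alternatingSum_add_alternatingSum_comp ?_ fun j => ?_
  · rw [← kaehlerMap_comp, slotExtraCodegeneracy_comp_slotCoface_zero, kaehlerMap_id]
  · rw [← kaehlerMap_comp, slotExtraCodegeneracy_comp_slotCoface_succ, kaehlerMap_comp]

theorem slotOmegaDiff_zero : slotOmegaDiff R σ 0 = 0 := by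
  have : Subsingleton Ω[MvPolynomial (σ × Fin 0) R⁄R] :=
    subsingleton_of_surjective R _ (C_surjective (σ × Fin 0))
  exact Subsingleton.elim _ _

end SlotPolynomials

theorem statement6_general (R σ : Type*) [CommRing R] :
    ∃ s : ∀ n : ℕ,
        Ω[MvPolynomial (σ × Fin (n + 2)) R⁄R] →+ Ω[MvPolynomial (σ × Fin (n + 1)) R⁄R],
      (s 0).comp (slotOmegaDiff R σ 1) = AddMonoidHom.id _ ∧
      ∀ n : ℕ,
        (s (n + 1)).comp (slotOmegaDiff R σ (n + 2)) +
          (slotOmegaDiff R σ (n + 1)).comp (s n) = AddMonoidHom.id _ := by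
  refine ⟨fun n => kaehlerMap (slotExtraCodegeneracy R σ (n + 1)), ?_,
    fun n => slotOmegaDiff_contraction R σ (n + 1)⟩
  simpa only [slotOmegaDiff_zero, AddMonoidHom.zero_comp, add_zero] using
    slotOmegaDiff_contraction R σ 0

/-- For `P = ℤ_p[{x_i}_{i ∈ σ}]` and `P(n)` the `(n+1)`-fold tensor power
of `P` over `ℤ_p`, the cochain complex of abelian groups with `n`-th term
`Ω¹_{P(n)/ℤ_p}` and differential the alternating sum of the maps induced by the coface
homomorphisms is homotopy equivalent to the zero cochain complex; i.e. there is a chain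
contraction: maps `s_n : Ω¹_{P(n+1)} → Ω¹_{P(n)}` with `s_0 ∘ d^0 = id` and
`s_{n+1} ∘ d^{n+1} + d^n ∘ s_n = id` for all `n`. -/
theorem statement6 (p : ℕ) [Fact p.Prime] (σ : Type*) :
    ∃ s : ∀ n : ℕ,
        Ω[tensorPowerPoly p σ (n + 1)⁄PadicInt p] →+ Ω[tensorPowerPoly p σ n⁄PadicInt p],
      (s 0).comp (tensorPowerPolyOmegaDiff p σ 0) = AddMonoidHom.id _ ∧
      ∀ n : ℕ,
        (s (n + 1)).comp (tensorPowerPolyOmegaDiff p σ (n + 1)) +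
          (tensorPowerPolyOmegaDiff p σ n).comp (s n) = AddMonoidHom.id _ :=
  statement6_general (PadicInt p) σ
end
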